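/- Suppose R is positive definite, the pair (A,B) is stabilizable (i.e. there exists F ∈ ℝ^{m×n} such that A + BF is Schur stable), A − B R⁻¹ Sᵀ is nonsingular, and there exist matrices C ∈ ℝ^{q×n}, D ∈ ℝ^{q×m} with Q = CᵀC, S = CᵀD, R = DᵀD such that for every θ ∈ [0,2π] the complex block matrix [[A − e^{iθ}·I_n, B],[C, D]] (real entries viewed as complex) has full column rank n + m. Then there exists a unique stabilizing solution X of the DARE, and this X is positive semidefinite. -/

import Mathlib

open Matrix

/-- A real square matrix is Schur stable if its spectral radius (the maximum
modulus of its complex eigenvalues) is strictly less than 1. -/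
def SchurStable {n : ℕ} (M : Matrix (Fin n) (Fin n) ℝ) : Prop :=
  spectralRadius ℂ (M.map Complex.ofReal) < 1

/-- A symmetric matrix `X` with `R + BᵀXB` invertible solving the discrete-time
algebraic Riccati equation (DARE). -/
def IsDARESolution {n m : ℕ} (A : Matrix (Fin n) (Fin n) ℝ) (B : Matrix (Fin n) (Fin m) ℝ)
    (Q : Matrix (Fin n) (Fin n) ℝ) (S : Matrix (Fin n) (Fin m) ℝ)
    (R : Matrix (Fin m) (Fin m) ℝ) (X : Matrix (Fin n) (Fin n) ℝ) : Prop :=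
  X.IsSymm ∧ IsUnit (R + Bᵀ * X * B) ∧
    X = Aᵀ * X * A + Q - (Aᵀ * X * B + S) * (R + Bᵀ * X * B)⁻¹ * (Aᵀ * X * B + S)ᵀ

/-- The gain `K_X = (R + BᵀXB)⁻¹ (BᵀXA + Sᵀ)`. -/
noncomputable def gain {n m : ℕ} (A : Matrix (Fin n) (Fin n) ℝ) (B : Matrix (Fin n) (Fin m) ℝ)
    (S : Matrix (Fin n) (Fin m) ℝ) (R : Matrix (Fin m) (Fin m) ℝ)
    (X : Matrix (Fin n) (Fin n) ℝ) : Matrix (Fin m) (Fin n) ℝ :=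
  (R + Bᵀ * X * B)⁻¹ * (Bᵀ * X * A + Sᵀ)

/-- A stabilizing solution of the DARE: a solution for which `A - B K_X` is Schur stable. -/
def IsStabilizingSolution {n m : ℕ} (A : Matrix (Fin n) (Fin n) ℝ) (B : Matrix (Fin n) (Fin m) ℝ)
    (Q : Matrix (Fin n) (Fin n) ℝ) (S : Matrix (Fin n) (Fin m) ℝ)
    (R : Matrix (Fin m) (Fin m) ℝ) (X : Matrix (Fin n) (Fin n) ℝ) : Prop :=
  IsDARESolution A B Q S R X ∧ SchurStable (A - B * gain A B S R X)

/-! The Newton–Kleinman iteration produces the solution. The cost matrix `X` of a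
stabilizing feedback `F` solves a Lyapunov equation, and completing the square in it shows that
`-gain X` is again stabilizing, with a smaller cost matrix. The cost matrices thus decrease in the
Loewner order and are bounded below by `0`; their limit is a fixed point of the Riccati operator.
Its closed loop is a limit of Schur stable matrices, so its spectrum lies in the closed unit disc.
An eigenvector for an eigenvalue on the unit circle would have zero stage cost and hence give a
kernel vector of the block matrix, which the rank condition excludes.

For uniqueness, the completion of squares is polarized: with the closed loops `U` of `X` and `V`
of `Y`, it gives `X - Y = Vᵀ * (X - Y) * U`, which iterates to `0`. -/

open Filter Topology
open scoped ComplexOrder MatrixOrder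

section TopologicalAlgebra

theorem tendsto_pow_atTop_nhds_zero_of_spectralRadius_lt_one {𝔸 : Type*} [NormedRing 𝔸]
    [NormedAlgebra ℂ 𝔸] [CompleteSpace 𝔸] {a : 𝔸} (ha : spectralRadius ℂ a < 1) :
    Tendsto (fun k : ℕ ↦ a ^ k) atTop (𝓝 0) := by
  obtain ⟨r, har, hr⟩ := exists_between ha
  lift r to NNReal using (hr.trans ENNReal.one_lt_top).ne
  have hbound : ∀ᶠ k : ℕ in atTop, ‖a ^ k‖ ≤ (r : ℝ) ^ k := by
    have hgelfand := spectrum.pow_nnnorm_pow_one_div_tendsto_nhds_spectralRadius a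
    filter_upwards [hgelfand.eventually_le_const har, eventually_gt_atTop 0] with k hk hk0
    rw [one_div, ENNReal.rpow_inv_le_iff (by positivity), ENNReal.rpow_natCast] at hk
    exact_mod_cast hk
  exact squeeze_zero_norm' hbound
    (tendsto_pow_atTop_nhds_zero_of_lt_one r.2 (by exact_mod_cast hr))

theorem eq_zero_of_eq_mul_mul {α : Type*} [MonoidWithZero α] [TopologicalSpace α]
    [ContinuousMul α] [T2Space α] {l p m : α} (hl : Tendsto (fun k : ℕ ↦ l ^ k) atTop (𝓝 0))
    (hm : Tendsto (fun k : ℕ ↦ m ^ k) atTop (𝓝 0)) (h : p = l * p * m) : p = 0 := by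
  have hpow (k : ℕ) : l ^ k * p * m ^ k = p := by
    induction k with
    | zero => simp
    | succ k ih =>
      calc l ^ (k + 1) * p * m ^ (k + 1) = l ^ k * (l * p * m) * m ^ k := by
            simp only [pow_succ l, pow_succ' m, mul_assoc]
        _ = p := by rw [← h, ih]
  have hlim := (hl.mul_const p).mul hm
  simp only [hpow, zero_mul] at hlim
  exact tendsto_nhds_unique tendsto_const_nhds hlim

theorem exists_eq_mul_mul_add (K : Type*) {𝔸 : Type*} [Field K] [Ring 𝔸] [Algebra K 𝔸]
    [FiniteDimensional K 𝔸] [TopologicalSpace 𝔸] [ContinuousMul 𝔸] [T2Space 𝔸] {l m : 𝔸}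
    (hl : Tendsto (fun k : ℕ ↦ l ^ k) atTop (𝓝 0))
    (hm : Tendsto (fun k : ℕ ↦ m ^ k) atTop (𝓝 0)) (n : 𝔸) : ∃ p, p = l * p * m + n := by
  let stein : 𝔸 →ₗ[K] 𝔸 := LinearMap.id - LinearMap.mulLeftRight K (l, m)
  have hstein (p : 𝔸) : stein p = p - l * p * m := by simp [stein]
  have hinj : Function.Injective stein := (injective_iff_map_eq_zero stein).2 fun p hp ↦
    eq_zero_of_eq_mul_mul hl hm (sub_eq_zero.1 (hstein p ▸ hp))
  obtain ⟨p, hp⟩ := LinearMap.injective_iff_surjective.1 hinj n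
  exact ⟨p, by rw [← hp, hstein, add_sub_cancel]⟩

theorem nonneg_of_eq_star_mul_mul_add {α : Type*} [Ring α] [StarRing α] [PartialOrder α]
    [StarOrderedRing α] [TopologicalSpace α] [IsTopologicalRing α] [ContinuousStar α]
    [OrderClosedTopology α] {m p n : α} (hm : Tendsto (fun k : ℕ ↦ m ^ k) atTop (𝓝 0))
    (hn : 0 ≤ n) (h : p = star m * p * m + n) : 0 ≤ p := by
  have hpow (k : ℕ) : star (m ^ k) * p * m ^ k ≤ p := by
    induction k with
    | zero => simp
    | succ k ih =>
      calc star (m ^ (k + 1)) * p * m ^ (k + 1) = star m * (star (m ^ k) * p * m ^ k) * m := by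
            simp only [pow_succ, star_mul, mul_assoc]
        _ ≤ star m * p * m := star_left_conjugate_le_conjugate ih m
        _ ≤ p := by nth_rw 2 [h]; exact le_add_of_nonneg_right hn
  have hlim := (hm.star.mul_const p).mul hm
  simp only [mul_zero] at hlim
  exact le_of_tendsto' hlim hpow

end TopologicalAlgebra

section Spectrum

open Polynomial in
theorem pow_natDegree_le_norm_eval_of_splits {𝕜 : Type*} [NormedField 𝕜] {p : 𝕜[X]}
    (hsplits : p.Splits) (hmonic : p.Monic) {r : ℝ} (hroots : ∀ w ∈ p.roots, ‖w‖ ≤ r) {z : 𝕜}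
    (hz : r ≤ ‖z‖) : (‖z‖ - r) ^ p.natDegree ≤ ‖p.eval z‖ := by
  have hnorm : ‖p.eval z‖ = (p.roots.map fun w ↦ ‖z - w‖).prod := by
    rw [hsplits.eval_eq_prod_roots_of_monic hmonic]
    simpa using map_multiset_prod (normHom : 𝕜 →*₀ ℝ) (p.roots.map fun w ↦ z - w)
  calc (‖z‖ - r) ^ p.natDegree = (p.roots.map fun _ ↦ ‖z‖ - r).prod := by
        simp [hsplits.natDegree_eq_card_roots]
    _ ≤ ‖p.eval z‖ := hnorm ▸ Multiset.prod_map_le_prod_map₀ _ _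
        (fun _ _ ↦ sub_nonneg.2 hz) fun w hw ↦
          (sub_le_sub_left (hroots w hw) _).trans (norm_sub_norm_le z w)

variable {n : Type*} [Fintype n] [DecidableEq n]

theorem mem_spectrum_iff_exists_mulVec_eq_smul {K : Type*} [Field K] {M : Matrix n n K} {z : K} :
    z ∈ spectrum K M ↔ ∃ v ≠ 0, M *ᵥ v = z • v := by
  rw [← Matrix.spectrum_toLin', ← Module.End.hasEigenvalue_iff_mem_spectrum]
  constructor
  · intro h
    obtain ⟨v, hv⟩ := h.exists_hasEigenvector
    exact ⟨v, hv.2, by simpa using hv.apply_eq_smul⟩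
  · rintro ⟨v, hv0, hv⟩
    exact Module.End.hasEigenvalue_of_hasEigenvector
      (Module.End.hasEigenvector_iff.2 ⟨Module.End.mem_eigenspace_iff.2 (by simpa using hv), hv0⟩)

theorem norm_le_of_mem_spectrum_of_tendsto {𝕜 ι : Type*} [NormedField 𝕜] [IsAlgClosed 𝕜]
    {l : Filter ι} [l.NeBot] {M : ι → Matrix n n 𝕜} {N : Matrix n n 𝕜} {r : ℝ}
    (hM : ∀ i, ∀ w ∈ spectrum 𝕜 (M i), ‖w‖ ≤ r) (hlim : Tendsto M l (𝓝 N)) {z : 𝕜}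
    (hz : z ∈ spectrum 𝕜 N) : ‖z‖ ≤ r := by
  by_contra! hrz
  have hbound (i : ι) : (‖z‖ - r) ^ Fintype.card n ≤ ‖(M i).charpoly.eval z‖ := by
    rw [← (M i).charpoly_natDegree_eq_dim]
    refine pow_natDegree_le_norm_eval_of_splits (IsAlgClosed.splits _) (M i).charpoly_monic
      (fun w hw ↦ hM i w ?_) hrz.le
    exact mem_spectrum_iff_isRoot_charpoly.2 (Polynomial.isRoot_of_mem_roots hw)
  have hcont : Continuous fun K : Matrix n n 𝕜 ↦ ‖K.charpoly.eval z‖ := by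
    simp only [eval_charpoly]
    fun_prop
  have hpos : (‖z‖ - r) ^ Fintype.card n ≤ ‖N.charpoly.eval z‖ :=
    ge_of_tendsto' ((hcont.tendsto N).comp hlim) hbound
  rw [(mem_spectrum_iff_isRoot_charpoly.1 hz).eq_zero, norm_zero] at hpos
  exact hpos.not_gt (pow_pos (sub_pos.2 hrz) _)

end Spectrum

section SchurStable

variable {n : ℕ} {M : Matrix (Fin n) (Fin n) ℝ}

theorem schurStable_iff_forall_mem_spectrum :
    SchurStable M ↔ ∀ z ∈ spectrum ℂ (M.map Complex.ofReal), ‖z‖ < 1 := by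
  let _ : NormedRing (Matrix (Fin n) (Fin n) ℂ) := Matrix.linftyOpNormedRing
  let _ : NormedAlgebra ℂ (Matrix (Fin n) (Fin n) ℂ) := Matrix.linftyOpNormedAlgebra
  constructor
  · intro h z hz
    have hle : (‖z‖₊ : ENNReal) ≤ spectralRadius ℂ (M.map Complex.ofReal) :=
      le_iSup₂ (f := fun (w : ℂ) (_ : w ∈ spectrum ℂ (M.map Complex.ofReal)) ↦
        (‖w‖₊ : ENNReal)) z hz
    exact_mod_cast hle.trans_lt h
  · intro h
    rcases (spectrum ℂ (M.map Complex.ofReal)).eq_empty_or_nonempty with hempty | hne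
    · simp [SchurStable, spectralRadius, hempty]
    · exact spectrum.spectralRadius_lt_of_forall_lt_of_nonempty (r := 1) hne
        fun z hz ↦ by exact_mod_cast h z hz

namespace SchurStable

theorem tendsto_pow (hM : SchurStable M) : Tendsto (fun k : ℕ ↦ M ^ k) atTop (𝓝 0) := by
  let _ : NormedRing (Matrix (Fin n) (Fin n) ℂ) := Matrix.linftyOpNormedRing
  let _ : NormedAlgebra ℂ (Matrix (Fin n) (Fin n) ℂ) := Matrix.linftyOpNormedAlgebra
  have hre : Continuous fun N : Matrix (Fin n) (Fin n) ℂ ↦ N.map Complex.re :=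
    continuous_id.matrix_map Complex.continuous_re
  have hpow (k : ℕ) : ((M.map Complex.ofReal) ^ k).map Complex.re = M ^ k := by
    have hmap : (M ^ k).map Complex.ofReal = (M.map Complex.ofReal) ^ k :=
      map_pow Complex.ofRealHom.mapMatrix M k
    ext i j
    simp [← hmap]
  have hlim := (hre.tendsto 0).comp (tendsto_pow_atTop_nhds_zero_of_spectralRadius_lt_one hM)
  simpa [Function.comp_def, hpow] using hlim

theorem tendsto_transpose_pow (hM : SchurStable M) :
    Tendsto (fun k : ℕ ↦ Mᵀ ^ k) atTop (𝓝 0) := by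
  have hcont : Continuous fun N : Matrix (Fin n) (Fin n) ℝ ↦ Nᵀ := by fun_prop
  simpa [Function.comp_def, transpose_pow] using (hcont.tendsto 0).comp hM.tendsto_pow

theorem norm_le_one_of_tendsto {ι : Type*} {l : Filter ι} [l.NeBot]
    {M : ι → Matrix (Fin n) (Fin n) ℝ} {N : Matrix (Fin n) (Fin n) ℝ}
    (hM : ∀ i, SchurStable (M i)) (hlim : Tendsto M l (𝓝 N)) {z : ℂ}
    (hz : z ∈ spectrum ℂ (N.map Complex.ofReal)) : ‖z‖ ≤ 1 := by
  have hcont : Continuous fun K : Matrix (Fin n) (Fin n) ℝ ↦ K.map Complex.ofReal :=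
    continuous_id.matrix_map Complex.continuous_ofReal
  exact norm_le_of_mem_spectrum_of_tendsto
    (fun i w hw ↦ (schurStable_iff_forall_mem_spectrum.1 (hM i) w hw).le)
    ((hcont.tendsto N).comp hlim) hz

end SchurStable

end SchurStable

section LoewnerOrder

theorem isClosed_setOf_posSemidef {n 𝕜 : Type*} [Finite n] [RCLike 𝕜] :
    IsClosed {M : Matrix n n 𝕜 | M.PosSemidef} := by
  cases nonempty_fintype n
  simp only [posSemidef_iff_dotProduct_mulVec, Set.ofPred_and, Set.ofPred_forall, IsHermitian]
  exact (isClosed_eq (by fun_prop) continuous_id).inter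
    (isClosed_iInter fun x ↦ isClosed_le continuous_const (by fun_prop))

instance matrixOrderClosedTopology {n 𝕜 : Type*} [Finite n] [RCLike 𝕜] :
    OrderClosedTopology (Matrix n n 𝕜) where
  isClosed_le' := by
    simp only [Matrix.le_iff]
    exact isClosed_setOf_posSemidef.preimage (continuous_snd.sub continuous_fst)

theorem exists_tendsto_of_antitone_of_bddBelow {n ι : Type*} [Finite n] [Preorder ι]
    {X : ι → Matrix n n ℝ} (hX : Antitone X) (hbdd : BddBelow (Set.range X)) :
    ∃ L, Tendsto X atTop (𝓝 L) := by
  classical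
  cases nonempty_fintype n
  obtain ⟨N, hN⟩ := hbdd
  have hpsd (k : ι) : (X k - N).PosSemidef := Matrix.le_iff.1 (hN (Set.mem_range_self k))
  have hquad (v : n → ℝ) : ∃ l, Tendsto (fun k ↦ v ⬝ᵥ (X k - N) *ᵥ v) atTop (𝓝 l) := by
    refine ⟨_, tendsto_atTop_ciInf (fun j k hjk ↦ ?_) ⟨0, ?_⟩⟩
    · have := (Matrix.le_iff.1 (sub_le_sub_right (hX hjk) N)).dotProduct_mulVec_nonneg v
      simpa [sub_mulVec] using this
    · rintro _ ⟨k, rfl⟩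
      simpa using (hpsd k).dotProduct_mulVec_nonneg v
  choose l hl using hquad
  have hentry (i j : n) : ∃ c, Tendsto (fun k ↦ X k i j) atTop (𝓝 c) := by
    have hpolar (k : ι) : ((Pi.single i 1 + Pi.single j 1) ⬝ᵥ
        (X k - N) *ᵥ (Pi.single i 1 + Pi.single j 1) - Pi.single i 1 ⬝ᵥ (X k - N) *ᵥ Pi.single i 1 -
        Pi.single j 1 ⬝ᵥ (X k - N) *ᵥ Pi.single j 1) / 2 + N i j = X k i j := by
      have hsymm : (X k - N) j i = (X k - N) i j := by simpa using (hpsd k).isHermitian.apply i j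
      simp only [mulVec_add, dotProduct_add, add_dotProduct, mulVec_single_one,
        single_one_dotProduct, col_apply, hsymm]
      simp only [Matrix.sub_apply]
      ring
    exact ⟨_, (((((hl _).sub (hl _)).sub (hl _)).div_const 2).add_const (N i j)).congr hpolar⟩
  choose L hL using hentry
  exact ⟨L, tendsto_pi_nhds.2 fun i ↦ tendsto_pi_nhds.2 (hL i)⟩

theorem mulVec_eq_zero_of_conjTranspose_mul_mul_mulVec_eq_zero {m n 𝕜 : Type*} [Fintype m]
    [Fintype n] [RCLike 𝕜] {W : Matrix m m 𝕜} (hW : W.PosDef) {G : Matrix m n 𝕜} {v : n → 𝕜}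
    (h : (Gᴴ * W * G) *ᵥ v = 0) : G *ᵥ v = 0 := by
  by_contra hGv
  have hpos := hW.dotProduct_mulVec_pos hGv
  rw [star_mulVec, ← dotProduct_mulVec, mulVec_mulVec, mulVec_mulVec, h, dotProduct_zero] at hpos
  exact hpos.false

theorem mulVec_eq_zero_of_mulVec_eq_smul {n 𝕜 : Type*} [Fintype n] [RCLike 𝕜]
    {M N X : Matrix n n 𝕜} (hX : X.PosSemidef) (hN : N.PosSemidef) (h : Mᴴ * X * M + N ≤ X)
    {z : 𝕜} {v : n → 𝕜} (hv : M *ᵥ v = z • v) (hz : 1 ≤ ‖z‖) : N *ᵥ v = 0 := by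
  have hX0 : 0 ≤ star v ⬝ᵥ X *ᵥ v := hX.dotProduct_mulVec_nonneg v
  have hconj : star v ⬝ᵥ (Mᴴ * X * M) *ᵥ v = (‖z‖ ^ 2 : ℝ) * (star v ⬝ᵥ X *ᵥ v) := by
    rw [← mulVec_mulVec, ← mulVec_mulVec, dotProduct_mulVec, ← star_mulVec, hv, mulVec_smul,
      star_smul, smul_dotProduct, dotProduct_smul, smul_smul]
    simp [RCLike.conj_mul]
  have hquad : (‖z‖ ^ 2 : ℝ) * (star v ⬝ᵥ X *ᵥ v) + star v ⬝ᵥ N *ᵥ v ≤ star v ⬝ᵥ X *ᵥ v := by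
    have := (Matrix.le_iff.1 h).dotProduct_mulVec_nonneg v
    rwa [sub_mulVec, add_mulVec, dotProduct_sub, dotProduct_add, hconj, sub_nonneg] at this
  have hone : (1 : 𝕜) ≤ (‖z‖ ^ 2 : ℝ) := by exact_mod_cast one_le_pow₀ hz
  have hnonpos : star v ⬝ᵥ N *ᵥ v ≤ 0 := (add_le_iff_nonpos_right _).1
    ((add_le_add_left (le_mul_of_one_le_left hX0 hone) _).trans hquad)
  exact (hN.dotProduct_mulVec_zero_iff v).1 (hnonpos.antisymm (hN.dotProduct_mulVec_nonneg v))

end LoewnerOrder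

section Complexification

variable {l m n : Type*}

theorem map_ofReal_mul [Fintype m] (M : Matrix l m ℝ) (N : Matrix m n ℝ) :
    (M * N).map Complex.ofReal = M.map Complex.ofReal * N.map Complex.ofReal :=
  Matrix.map_mul (f := Complex.ofRealHom)

theorem map_ofReal_add (M N : Matrix m n ℝ) :
    (M + N).map Complex.ofReal = M.map Complex.ofReal + N.map Complex.ofReal :=
  Matrix.map_add _ Complex.ofReal_add M N

theorem map_ofReal_sub (M N : Matrix m n ℝ) :
    (M - N).map Complex.ofReal = M.map Complex.ofReal - N.map Complex.ofReal :=
  Matrix.map_sub _ Complex.ofReal_sub M N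

theorem map_ofReal_transpose (M : Matrix m n ℝ) :
    Mᵀ.map Complex.ofReal = (M.map Complex.ofReal)ᴴ := by
  ext i j
  simp

theorem posSemidef_map_ofReal [Finite n] {X : Matrix n n ℝ} (hX : X.PosSemidef) :
    (X.map Complex.ofReal).PosSemidef := by
  classical
  cases nonempty_fintype n
  obtain ⟨Y, rfl⟩ := CStarAlgebra.nonneg_iff_eq_star_mul_self.1 hX.nonneg
  rw [map_ofReal_mul, star_eq_conjTranspose, conjTranspose_eq_transpose_of_trivial,
    map_ofReal_transpose]
  exact posSemidef_conjTranspose_mul_self _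

theorem posDef_map_ofReal [Finite n] {X : Matrix n n ℝ} (hX : X.PosDef) :
    (X.map Complex.ofReal).PosDef := by
  classical
  cases nonempty_fintype n
  exact (posSemidef_map_ofReal hX.posSemidef).posDef_iff_isUnit.2
    (hX.isUnit.map Complex.ofRealHom.mapMatrix)

theorem map_ofReal_mulVec_eq_zero_of_mulVec_eq_smul [Fintype n] {M N X : Matrix n n ℝ}
    (hX : X.PosSemidef) (hN : N.PosSemidef) (h : Mᵀ * X * M + N ≤ X) {z : ℂ} {v : n → ℂ}
    (hv : M.map Complex.ofReal *ᵥ v = z • v) (hz : 1 ≤ ‖z‖) : N.map Complex.ofReal *ᵥ v = 0 := by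
  refine mulVec_eq_zero_of_mulVec_eq_smul (posSemidef_map_ofReal hX) (posSemidef_map_ofReal hN)
    (Matrix.le_iff.2 ?_) hv hz
  simpa only [map_ofReal_sub, map_ofReal_add, map_ofReal_mul, map_ofReal_transpose] using
    posSemidef_map_ofReal (Matrix.le_iff.1 h)

end Complexification

section Riccati

variable {n m : ℕ} {A : Matrix (Fin n) (Fin n) ℝ} {B : Matrix (Fin n) (Fin m) ℝ}
  {Q : Matrix (Fin n) (Fin n) ℝ} {S : Matrix (Fin n) (Fin m) ℝ} {R : Matrix (Fin m) (Fin m) ℝ}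
  {X Y : Matrix (Fin n) (Fin n) ℝ}

/-- The stage cost `xᵀQx + 2xᵀSu + uᵀRu`, polarized and evaluated at the two linear feedbacks
`u = Gx` (on the left) and `u = Fx` (on the right). The cost of a single feedback `F` is the
diagonal value `stageCost Q S R F F`; the uniqueness proof needs the off-diagonal values. -/
def stageCost (Q : Matrix (Fin n) (Fin n) ℝ) (S : Matrix (Fin n) (Fin m) ℝ)
    (R : Matrix (Fin m) (Fin m) ℝ) (G F : Matrix (Fin m) (Fin n) ℝ) : Matrix (Fin n) (Fin n) ℝ :=
  Q + S * F + Gᵀ * Sᵀ + Gᵀ * R * F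

/-- The Riccati operator, whose fixed points solve the DARE. -/
noncomputable def riccati (A : Matrix (Fin n) (Fin n) ℝ) (B : Matrix (Fin n) (Fin m) ℝ)
    (Q : Matrix (Fin n) (Fin n) ℝ) (S : Matrix (Fin n) (Fin m) ℝ) (R : Matrix (Fin m) (Fin m) ℝ)
    (X : Matrix (Fin n) (Fin n) ℝ) : Matrix (Fin n) (Fin n) ℝ :=
  Aᵀ * X * A + Q - (Aᵀ * X * B + S) * (R + Bᵀ * X * B)⁻¹ * (Aᵀ * X * B + S)ᵀ

theorem mul_gain (hW : IsUnit (R + Bᵀ * X * B)) :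
    (R + Bᵀ * X * B) * gain A B S R X = Bᵀ * X * A + Sᵀ :=
  mul_nonsing_inv_cancel_left _ _ ((isUnit_iff_isUnit_det _).1 hW)

theorem gain_transpose_mul (hR : R.IsSymm) (hX : X.IsSymm) (hW : IsUnit (R + Bᵀ * X * B)) :
    (gain A B S R X)ᵀ * (R + Bᵀ * X * B) = Aᵀ * X * B + S := by
  have h := congrArg transpose (mul_gain (A := A) (S := S) hW)
  simpa [hR.eq, hX.eq, Matrix.mul_assoc] using h

theorem riccati_eq_sub (hR : R.IsSymm) (hX : X.IsSymm) (hW : IsUnit (R + Bᵀ * X * B)) :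
    riccati A B Q S R X =
      Aᵀ * X * A + Q - (gain A B S R X)ᵀ * (R + Bᵀ * X * B) * gain A B S R X := by
  have hgain : (R + Bᵀ * X * B)⁻¹ * (Aᵀ * X * B + S)ᵀ = gain A B S R X := by
    simp [gain, hX.eq, Matrix.mul_assoc]
  rw [riccati, Matrix.mul_assoc _ _ (_ᵀ), hgain, gain_transpose_mul hR hX hW]

theorem conj_add_stageCost (hR : R.IsSymm) (hX : X.IsSymm) (hW : IsUnit (R + Bᵀ * X * B))
    (G F : Matrix (Fin m) (Fin n) ℝ) :
    (A + B * G)ᵀ * X * (A + B * F) + stageCost Q S R G F = riccati A B Q S R X +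
      (G + gain A B S R X)ᵀ * (R + Bᵀ * X * B) * (F + gain A B S R X) := by
  calc (A + B * G)ᵀ * X * (A + B * F) + stageCost Q S R G F
      = Aᵀ * X * A + Q + (Aᵀ * X * B + S) * F + Gᵀ * (Bᵀ * X * A + Sᵀ) +
          Gᵀ * (R + Bᵀ * X * B) * F := by
        simp only [stageCost, transpose_add, transpose_mul, Matrix.add_mul, Matrix.mul_add,
          Matrix.mul_assoc]
        abel
    _ = riccati A B Q S R X +
          (G + gain A B S R X)ᵀ * (R + Bᵀ * X * B) * (F + gain A B S R X) := by
        rw [riccati_eq_sub hR hX hW, ← mul_gain hW, ← gain_transpose_mul hR hX hW]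
        generalize gain A B S R X = K, R + Bᵀ * X * B = W
        simp only [transpose_add, Matrix.add_mul, Matrix.mul_add, Matrix.mul_assoc]
        abel

theorem conj_neg_gain_right_add_stageCost (hR : R.IsSymm) (hX : X.IsSymm)
    (hW : IsUnit (R + Bᵀ * X * B)) (G : Matrix (Fin m) (Fin n) ℝ) :
    (A + B * G)ᵀ * X * (A + B * -gain A B S R X) + stageCost Q S R G (-gain A B S R X) =
      riccati A B Q S R X := by
  rw [conj_add_stageCost hR hX hW, neg_add_cancel, Matrix.mul_zero, add_zero]

theorem conj_neg_gain_left_add_stageCost (hR : R.IsSymm) (hX : X.IsSymm)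
    (hW : IsUnit (R + Bᵀ * X * B)) (F : Matrix (Fin m) (Fin n) ℝ) :
    (A + B * -gain A B S R X)ᵀ * X * (A + B * F) + stageCost Q S R (-gain A B S R X) F =
      riccati A B Q S R X := by
  rw [conj_add_stageCost hR hX hW, neg_add_cancel, transpose_zero, Matrix.zero_mul, Matrix.zero_mul,
    add_zero]

theorem IsDARESolution.eq_riccati (h : IsDARESolution A B Q S R X) : X = riccati A B Q S R X :=
  h.2.2

theorem IsDARESolution.sub_eq (hR : R.IsSymm) (hX : IsDARESolution A B Q S R X)
    (hY : IsDARESolution A B Q S R Y) :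
    X - Y = (A - B * gain A B S R Y)ᵀ * (X - Y) * (A - B * gain A B S R X) := by
  have hXeq := conj_neg_gain_right_add_stageCost (A := A) (Q := Q) (S := S) hR hX.1 hX.2.1
    (-gain A B S R Y)
  have hYeq := conj_neg_gain_left_add_stageCost (A := A) (Q := Q) (S := S) hR hY.1 hY.2.1
    (-gain A B S R X)
  rw [← hX.eq_riccati] at hXeq
  rw [← hY.eq_riccati] at hYeq
  simp only [Matrix.mul_neg, ← sub_eq_add_neg] at hXeq hYeq
  rw [Matrix.mul_sub _ X Y, Matrix.sub_mul (_ * X), ← add_sub_add_right_eq_sub (_ * X * _), hXeq,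
    hYeq]

theorem IsStabilizingSolution.unique (hR : R.IsSymm) (hX : IsStabilizingSolution A B Q S R X)
    (hY : IsStabilizingSolution A B Q S R Y) : X = Y :=
  sub_eq_zero.1 (eq_zero_of_eq_mul_mul hY.2.tendsto_transpose_pow hX.2.tendsto_pow
    (hX.1.sub_eq hR hY.1))

theorem continuousAt_gain (hW : IsUnit (R + Bᵀ * X * B)) : ContinuousAt (gain A B S R) X := by
  have hinv : ContinuousAt (fun W : Matrix (Fin m) (Fin m) ℝ ↦ W⁻¹) (R + Bᵀ * X * B) := by
    simp only [inv_def, Ring.inverse_eq_inv']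
    exact (continuous_id.matrix_det.continuousAt.inv₀
      ((isUnit_iff_isUnit_det _).1 hW).ne_zero).smul continuous_id.matrix_adjugate.continuousAt
  have hconj : Continuous fun K : Matrix (Fin n) (Fin n) ℝ ↦ R + Bᵀ * K * B := by fun_prop
  have hlin : Continuous fun K : Matrix (Fin n) (Fin n) ℝ ↦ Bᵀ * K * A + Sᵀ := by fun_prop
  have hmul : Continuous fun p : Matrix (Fin m) (Fin m) ℝ × Matrix (Fin m) (Fin n) ℝ ↦
      p.1 * p.2 := by fun_prop
  have hinv_conj : ContinuousAt (fun K ↦ (R + Bᵀ * K * B)⁻¹) X :=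
    hinv.comp (f := fun K : Matrix (Fin n) (Fin n) ℝ ↦ R + Bᵀ * K * B) hconj.continuousAt
  exact hmul.continuousAt.comp (f := fun K ↦ ((R + Bᵀ * K * B)⁻¹, Bᵀ * K * A + Sᵀ))
    (hinv_conj.prodMk hlin.continuousAt)

end Riccati

section Kleinman

variable {n m : ℕ} {A : Matrix (Fin n) (Fin n) ℝ} {B : Matrix (Fin n) (Fin m) ℝ}
  {Q : Matrix (Fin n) (Fin n) ℝ} {S : Matrix (Fin n) (Fin m) ℝ} {R : Matrix (Fin m) (Fin m) ℝ}
  {F : Matrix (Fin m) (Fin n) ℝ} {X Y : Matrix (Fin n) (Fin n) ℝ}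

/-- `X` is the cost matrix of the stabilizing feedback `u = Fx`: `xᵀXx` is the sum of the stage
costs along the trajectory of `A + B * F` starting at `x`. It is encoded by the Lyapunov equation
that this sum satisfies. -/
structure IsFeedbackCost (A : Matrix (Fin n) (Fin n) ℝ) (B : Matrix (Fin n) (Fin m) ℝ)
    (Q : Matrix (Fin n) (Fin n) ℝ) (S : Matrix (Fin n) (Fin m) ℝ) (R : Matrix (Fin m) (Fin m) ℝ)
    (F : Matrix (Fin m) (Fin n) ℝ) (X : Matrix (Fin n) (Fin n) ℝ) : Prop where
  schurStable : SchurStable (A + B * F)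
  posSemidef : X.PosSemidef
  lyapunov : (A + B * F)ᵀ * X * (A + B * F) + stageCost Q S R F F = X

theorem posSemidef_of_eq_transpose_mul_mul_add {M N P : Matrix (Fin n) (Fin n) ℝ}
    (hM : SchurStable M) (hN : N.PosSemidef) (h : P = Mᵀ * P * M + N) : P.PosSemidef := by
  rw [← conjTranspose_eq_transpose_of_trivial] at h
  exact Matrix.nonneg_iff_posSemidef.1 (nonneg_of_eq_star_mul_mul_add hM.tendsto_pow hN.nonneg h)

theorem exists_isFeedbackCost (hF : SchurStable (A + B * F))
    (hcost : (stageCost Q S R F F).PosSemidef) : ∃ X, IsFeedbackCost A B Q S R F X := by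
  obtain ⟨X, hX⟩ := exists_eq_mul_mul_add ℝ hF.tendsto_transpose_pow hF.tendsto_pow
    (stageCost Q S R F F)
  exact ⟨X, hF, posSemidef_of_eq_transpose_mul_mul_add hF hcost hX, hX.symm⟩

theorem posDef_add_transpose_mul_mul (hR : R.PosDef) (hX : X.PosSemidef) :
    (R + Bᵀ * X * B).PosDef := by
  rw [← conjTranspose_eq_transpose_of_trivial]
  exact hR.add_posSemidef (hX.conjTranspose_mul_mul_same B)

theorem conj_neg_gain_add_stageCost (hR : R.PosDef) (hX : X.PosSemidef) :
    (A + B * -gain A B S R X)ᵀ * X * (A + B * -gain A B S R X) +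
      stageCost Q S R (-gain A B S R X) (-gain A B S R X) = riccati A B Q S R X :=
  conj_neg_gain_right_add_stageCost (isHermitian_iff_isSymm.1 hR.isHermitian)
    (isHermitian_iff_isSymm.1 hX.isHermitian) (posDef_add_transpose_mul_mul hR hX).isUnit _

namespace IsFeedbackCost

theorem riccati_add (hR : R.PosDef) (hX : IsFeedbackCost A B Q S R F X) :
    riccati A B Q S R X +
      (F + gain A B S R X)ᵀ * (R + Bᵀ * X * B) * (F + gain A B S R X) = X := by
  rw [← conj_add_stageCost (isHermitian_iff_isSymm.1 hR.isHermitian)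
    (isHermitian_iff_isSymm.1 hX.posSemidef.isHermitian)
    (posDef_add_transpose_mul_mul hR hX.posSemidef).isUnit, hX.lyapunov]

theorem posSemidef_conj_add_gain (hR : R.PosDef) (hX : IsFeedbackCost A B Q S R F X) :
    ((F + gain A B S R X)ᵀ * (R + Bᵀ * X * B) * (F + gain A B S R X)).PosSemidef := by
  rw [← conjTranspose_eq_transpose_of_trivial (F + _)]
  exact (posDef_add_transpose_mul_mul hR hX.posSemidef).posSemidef.conjTranspose_mul_mul_same _

/-- An eigenvector for an eigenvalue of modulus at least `1` of the new closed loop is killed by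
`F + gain X`, hence is an eigenvector of the old closed loop, which is stable. -/
theorem schurStable_neg_gain (hR : R.PosDef)
    (hcost : ∀ F : Matrix (Fin m) (Fin n) ℝ, (stageCost Q S R F F).PosSemidef)
    (hX : IsFeedbackCost A B Q S R F X) : SchurStable (A + B * -gain A B S R X) := by
  refine schurStable_iff_forall_mem_spectrum.2 fun z hz ↦ ?_
  obtain ⟨v, hv0, hv⟩ := mem_spectrum_iff_exists_mulVec_eq_smul.1 hz
  by_contra! hz1
  have hdecrease : (A + B * -gain A B S R X)ᵀ * X * (A + B * -gain A B S R X) +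
      (F + gain A B S R X)ᵀ * (R + Bᵀ * X * B) * (F + gain A B S R X) ≤ X := by
    refine le_of_le_of_eq ?_ (hX.riccati_add hR)
    rw [← conj_neg_gain_add_stageCost hR hX.posSemidef]
    gcongr
    exact le_add_of_nonneg_right (hcost _).nonneg
  have hconj := map_ofReal_mulVec_eq_zero_of_mulVec_eq_smul hX.posSemidef
    (hX.posSemidef_conj_add_gain hR) hdecrease hv hz1
  have hgain : (F + gain A B S R X).map Complex.ofReal *ᵥ v = 0 := by
    refine mulVec_eq_zero_of_conjTranspose_mul_mul_mulVec_eq_zero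
      (posDef_map_ofReal (posDef_add_transpose_mul_mul (B := B) hR hX.posSemidef)) ?_
    rwa [← map_ofReal_transpose, ← map_ofReal_mul, ← map_ofReal_mul]
  have hold : (A + B * F).map Complex.ofReal *ᵥ v = z • v := by
    have hsplit : A + B * F = A + B * -gain A B S R X + B * (F + gain A B S R X) := by
      rw [add_assoc, ← Matrix.mul_add, neg_add_cancel_comm_assoc]
    rw [hsplit, map_ofReal_add, map_ofReal_mul _ (F + _), add_mulVec, hv, ← mulVec_mulVec, hgain,
      mulVec_zero, add_zero]
  exact hz1.not_gt (schurStable_iff_forall_mem_spectrum.1 hX.schurStable z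
    (mem_spectrum_iff_exists_mulVec_eq_smul.2 ⟨v, hv0, hold⟩))

theorem le_of_neg_gain (hR : R.PosDef) (hX : IsFeedbackCost A B Q S R F X)
    (hY : IsFeedbackCost A B Q S R (-gain A B S R X) Y) : Y ≤ X := by
  refine posSemidef_of_eq_transpose_mul_mul_add hY.schurStable (hX.posSemidef_conj_add_gain hR) ?_
  rw [Matrix.mul_sub _ X Y, Matrix.sub_mul (_ * X), ← add_sub_add_right_eq_sub (_ * X * _),
    conj_neg_gain_add_stageCost hR hX.posSemidef, hY.lyapunov, sub_add_eq_add_sub,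
    hX.riccati_add hR]

end IsFeedbackCost

theorem exists_kleinman_sequence (hR : R.PosDef)
    (hcost : ∀ F : Matrix (Fin m) (Fin n) ℝ, (stageCost Q S R F F).PosSemidef)
    (hstab : ∃ F : Matrix (Fin m) (Fin n) ℝ, SchurStable (A + B * F)) :
    ∃ (F : ℕ → Matrix (Fin m) (Fin n) ℝ) (X : ℕ → Matrix (Fin n) (Fin n) ℝ),
      (∀ k, IsFeedbackCost A B Q S R (F k) (X k)) ∧ (∀ k, F (k + 1) = -gain A B S R (X k)) ∧
        Antitone X := by
  obtain ⟨F₀, hF₀⟩ := hstab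
  choose! cost hcost_spec using fun (F : Matrix (Fin m) (Fin n) ℝ) (hF : SchurStable (A + B * F)) ↦
    exists_isFeedbackCost hF (hcost F)
  let F : ℕ → Matrix (Fin m) (Fin n) ℝ := fun k ↦ (fun K ↦ -gain A B S R (cost K))^[k] F₀
  have hsucc (k : ℕ) : F (k + 1) = -gain A B S R (cost (F k)) :=
    Function.iterate_succ_apply' _ k F₀
  have hF (k : ℕ) : IsFeedbackCost A B Q S R (F k) (cost (F k)) := by
    induction k with
    | zero => exact hcost_spec F₀ hF₀
    | succ k ih => exact hcost_spec _ (hsucc k ▸ ih.schurStable_neg_gain hR hcost)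
  exact ⟨F, fun k ↦ cost (F k), hF, hsucc,
    antitone_nat_of_succ_le fun k ↦ (hF k).le_of_neg_gain hR (hsucc k ▸ hF (k + 1))⟩

theorem exists_posSemidef_fixed_point_riccati (hR : R.PosDef)
    (hcost : ∀ F : Matrix (Fin m) (Fin n) ℝ, (stageCost Q S R F F).PosSemidef)
    (hstab : ∃ F : Matrix (Fin m) (Fin n) ℝ, SchurStable (A + B * F)) :
    ∃ X : Matrix (Fin n) (Fin n) ℝ, X.PosSemidef ∧ riccati A B Q S R X = X ∧
      ∀ z ∈ spectrum ℂ ((A + B * -gain A B S R X).map Complex.ofReal), ‖z‖ ≤ 1 := by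
  obtain ⟨F, X, hFX, hF, hX⟩ := exists_kleinman_sequence hR hcost hstab
  have hbdd : BddBelow (Set.range X) :=
    ⟨0, Set.forall_mem_range.2 fun k ↦ (hFX k).posSemidef.nonneg⟩
  obtain ⟨L, hL⟩ := exists_tendsto_of_antitone_of_bddBelow hX hbdd
  have hLpsd : L.PosSemidef := Matrix.nonneg_iff_posSemidef.1 <|
    ge_of_tendsto' hL fun k ↦ (hFX k).posSemidef.nonneg
  have hXsucc : Tendsto (fun k ↦ X (k + 1)) atTop (𝓝 L) := (tendsto_add_atTop_iff_nat 1).2 hL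
  have hFsucc : Tendsto (fun k ↦ F (k + 1)) atTop (𝓝 (-gain A B S R L)) := by
    simp only [hF]
    exact ((continuousAt_gain (posDef_add_transpose_mul_mul hR hLpsd).isUnit).tendsto.comp hL).neg
  have hloop : Continuous fun K : Matrix (Fin m) (Fin n) ℝ ↦ A + B * K := by fun_prop
  have hlyap : Continuous fun p : Matrix (Fin m) (Fin n) ℝ × Matrix (Fin n) (Fin n) ℝ ↦
      (A + B * p.1)ᵀ * p.2 * (A + B * p.1) + stageCost Q S R p.1 p.1 := by
    unfold stageCost
    fun_prop
  have hloop_lim : Tendsto (fun k ↦ A + B * F (k + 1)) atTop (𝓝 (A + B * -gain A B S R L)) :=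
    (hloop.tendsto _).comp hFsucc
  refine ⟨L, hLpsd, ?_, fun z ↦
    SchurStable.norm_le_one_of_tendsto (fun k ↦ (hFX (k + 1)).schurStable) hloop_lim⟩
  rw [← conj_neg_gain_add_stageCost hR hLpsd]
  have hlim := (hlyap.tendsto (-gain A B S R L, L)).comp (hFsucc.prodMk_nhds hXsucc)
  exact tendsto_nhds_unique (hlim.congr fun k ↦ (hFX (k + 1)).lyapunov) hXsucc

theorem schurStable_of_riccati_eq_self (hR : R.PosDef)
    (hcost : ∀ F : Matrix (Fin m) (Fin n) ℝ, (stageCost Q S R F F).PosSemidef)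
    (hobs : ∀ (F : Matrix (Fin m) (Fin n) ℝ) (z : ℂ) (v : Fin n → ℂ), ‖z‖ = 1 →
      (A + B * F).map Complex.ofReal *ᵥ v = z • v →
      (stageCost Q S R F F).map Complex.ofReal *ᵥ v = 0 → v = 0)
    (hX : X.PosSemidef) (hfix : riccati A B Q S R X = X)
    (hdisc : ∀ z ∈ spectrum ℂ ((A + B * -gain A B S R X).map Complex.ofReal), ‖z‖ ≤ 1) :
    SchurStable (A + B * -gain A B S R X) := by
  refine schurStable_iff_forall_mem_spectrum.2 fun z hz ↦ (hdisc z hz).lt_of_ne fun hz1 ↦ ?_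
  obtain ⟨v, hv0, hv⟩ := mem_spectrum_iff_exists_mulVec_eq_smul.1 hz
  exact hv0 <| hobs _ z v hz1 hv <| map_ofReal_mulVec_eq_zero_of_mulVec_eq_smul hX (hcost _)
    ((conj_neg_gain_add_stageCost hR hX).trans hfix).le hv hz1.ge

theorem exists_posSemidef_isStabilizingSolution (hR : R.PosDef)
    (hcost : ∀ F : Matrix (Fin m) (Fin n) ℝ, (stageCost Q S R F F).PosSemidef)
    (hstab : ∃ F : Matrix (Fin m) (Fin n) ℝ, SchurStable (A + B * F))
    (hobs : ∀ (F : Matrix (Fin m) (Fin n) ℝ) (z : ℂ) (v : Fin n → ℂ), ‖z‖ = 1 →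
      (A + B * F).map Complex.ofReal *ᵥ v = z • v →
      (stageCost Q S R F F).map Complex.ofReal *ᵥ v = 0 → v = 0) :
    ∃ X, X.PosSemidef ∧ IsStabilizingSolution A B Q S R X := by
  obtain ⟨X, hX, hfix, hdisc⟩ := exists_posSemidef_fixed_point_riccati hR hcost hstab
  refine ⟨X, hX, ⟨isHermitian_iff_isSymm.1 hX.isHermitian,
    (posDef_add_transpose_mul_mul hR hX).isUnit, hfix.symm⟩, ?_⟩
  rw [sub_eq_add_neg, ← Matrix.mul_neg]
  exact schurStable_of_riccati_eq_self hR hcost hobs hX hfix hdisc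

end Kleinman

section RankCondition

theorem exists_mem_Icc_exp_mul_I_eq {z : ℂ} (hz : ‖z‖ = 1) :
    ∃ θ ∈ Set.Icc 0 (2 * Real.pi), Complex.exp (θ * Complex.I) = z := by
  obtain ⟨φ, rfl⟩ := (Complex.norm_eq_one_iff z).1 hz
  have hper : Function.Periodic (fun θ : ℝ ↦ Complex.exp (θ * Complex.I)) (2 * Real.pi) :=
    fun θ ↦ by simpa using Complex.exp_mul_I_periodic θ
  obtain ⟨θ, hθ, h⟩ := hper.exists_mem_Ico₀ Real.two_pi_pos φ
  exact ⟨θ, Set.Ico_subset_Icc_self hθ, h.symm⟩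

theorem eq_zero_of_mulVec_eq_zero_of_rank {l m K : Type*} [Fintype m] [Field K]
    {M : Matrix l m K} (hM : M.rank = Fintype.card m) {v : m → K} (hv : M *ᵥ v = 0) : v = 0 := by
  have hker : LinearMap.ker M.mulVecLin = ⊥ := by
    have h := M.mulVecLin.finrank_range_add_finrank_ker
    rw [Module.finrank_fintype_fun_eq_card] at h
    exact Submodule.finrank_eq_zero.1 (Nat.add_eq_left.1 (h.trans hM.symm))
  exact ker_mulVecLin_eq_bot_iff.1 hker v hv

theorem fromBlocks_mulVec_elim_eq_zero {n m q K : Type*} [Fintype n] [DecidableEq n] [Fintype m]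
    [CommRing K] {A : Matrix n n K} {B : Matrix n m K} {C : Matrix q n K} {D : Matrix q m K}
    {F : Matrix m n K} {z : K} {v : n → K} (hv : (A + B * F) *ᵥ v = z • v)
    (hCD : (C + D * F) *ᵥ v = 0) :
    fromBlocks (A - z • 1) B C D *ᵥ Sum.elim v (F *ᵥ v) = 0 := by
  rw [add_mulVec, ← mulVec_mulVec] at hv hCD
  simp [fromBlocks_mulVec, sub_mulVec, smul_mulVec, sub_add_eq_add_sub, hv, hCD, -mulVec_mulVec]

theorem eq_zero_of_rank_fromBlocks {n m q K : Type*} [Fintype n] [DecidableEq n] [Fintype m]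
    [Field K] {A : Matrix n n K} {B : Matrix n m K} {C : Matrix q n K} {D : Matrix q m K} {z : K}
    (hrank : (fromBlocks (A - z • 1) B C D).rank = Fintype.card n + Fintype.card m)
    {F : Matrix m n K} {v : n → K} (hv : (A + B * F) *ᵥ v = z • v)
    (hCD : (C + D * F) *ᵥ v = 0) : v = 0 := by
  have h := eq_zero_of_mulVec_eq_zero_of_rank (hrank.trans Fintype.card_sum.symm)
    (fromBlocks_mulVec_elim_eq_zero hv hCD)
  exact congrArg (· ∘ Sum.inl) h

variable {n m q : ℕ} (C : Matrix (Fin q) (Fin n) ℝ) (D : Matrix (Fin q) (Fin m) ℝ)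

theorem stageCost_transpose_mul (G F : Matrix (Fin m) (Fin n) ℝ) :
    stageCost (Cᵀ * C) (Cᵀ * D) (Dᵀ * D) G F = (C + D * G)ᵀ * (C + D * F) := by
  simp only [stageCost, transpose_add, transpose_mul, transpose_transpose, Matrix.add_mul,
    Matrix.mul_add, Matrix.mul_assoc]
  abel

theorem posSemidef_stageCost (F : Matrix (Fin m) (Fin n) ℝ) :
    (stageCost (Cᵀ * C) (Cᵀ * D) (Dᵀ * D) F F).PosSemidef := by
  rw [stageCost_transpose_mul, ← conjTranspose_eq_transpose_of_trivial]
  exact posSemidef_conjTranspose_mul_self _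

variable {C D} in
theorem map_ofReal_stageCost_mulVec_eq_zero {F : Matrix (Fin m) (Fin n) ℝ} {v : Fin n → ℂ}
    (h : (stageCost (Cᵀ * C) (Cᵀ * D) (Dᵀ * D) F F).map Complex.ofReal *ᵥ v = 0) :
    (C + D * F).map Complex.ofReal *ᵥ v = 0 := by
  rw [stageCost_transpose_mul, map_ofReal_mul, map_ofReal_transpose] at h
  exact (conjTranspose_mul_self_mulVec_eq_zero _ _).1 h

end RankCondition

theorem dare_exists_unique_stabilizing_solution_general {n m q : ℕ}
    (A : Matrix (Fin n) (Fin n) ℝ) (B : Matrix (Fin n) (Fin m) ℝ)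
    (Q : Matrix (Fin n) (Fin n) ℝ) (S : Matrix (Fin n) (Fin m) ℝ)
    (R : Matrix (Fin m) (Fin m) ℝ) (hRpd : R.PosDef)
    (hstab : ∃ F : Matrix (Fin m) (Fin n) ℝ, SchurStable (A + B * F))
    (C : Matrix (Fin q) (Fin n) ℝ) (D : Matrix (Fin q) (Fin m) ℝ)
    (hQ : Q = Cᵀ * C) (hS : S = Cᵀ * D) (hR : R = Dᵀ * D)
    (hrank : ∀ θ : ℝ, θ ∈ Set.Icc (0 : ℝ) (2 * Real.pi) →
      (Matrix.fromBlocks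
        (A.map Complex.ofReal - Complex.exp (θ * Complex.I) • (1 : Matrix (Fin n) (Fin n) ℂ))
        (B.map Complex.ofReal) (C.map Complex.ofReal) (D.map Complex.ofReal)).rank = n + m) :
    ∃ X : Matrix (Fin n) (Fin n) ℝ, IsStabilizingSolution A B Q S R X ∧ X.PosSemidef ∧
      ∀ Y : Matrix (Fin n) (Fin n) ℝ, IsStabilizingSolution A B Q S R Y → Y = X := by
  subst hQ hS hR
  have hobs (F : Matrix (Fin m) (Fin n) ℝ) (z : ℂ) (v : Fin n → ℂ) (hz : ‖z‖ = 1)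
      (hv : (A + B * F).map Complex.ofReal *ᵥ v = z • v)
      (hcost : (stageCost (Cᵀ * C) (Cᵀ * D) (Dᵀ * D) F F).map Complex.ofReal *ᵥ v = 0) :
      v = 0 := by
    obtain ⟨θ, hθ, rfl⟩ := exists_mem_Icc_exp_mul_I_eq hz
    have hCD := map_ofReal_stageCost_mulVec_eq_zero hcost
    rw [map_ofReal_add, map_ofReal_mul] at hv hCD
    exact eq_zero_of_rank_fromBlocks (by simpa using hrank θ hθ) hv hCD
  obtain ⟨X, hX, hXstab⟩ :=
    exists_posSemidef_isStabilizingSolution hRpd (posSemidef_stageCost C D) hstab hobs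
  exact ⟨X, hXstab, hX, fun Y hY ↦ hY.unique (isHermitian_iff_isSymm.1 hRpd.isHermitian) hXstab⟩

/-- Under positive definiteness of `R`, stabilizability of `(A,B)`,
nonsingularity of `A - B R⁻¹ Sᵀ`, and the full-column-rank frequency condition on
`[[A - e^{iθ} I, B], [C, D]]` where `Q = CᵀC`, `S = CᵀD`, `R = DᵀD`, there exists a
unique stabilizing solution of the DARE, and this solution is positive semidefinite. -/
theorem dare_exists_unique_stabilizing_solution {n m q : ℕ}
    (A : Matrix (Fin n) (Fin n) ℝ) (B : Matrix (Fin n) (Fin m) ℝ)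
    (Q : Matrix (Fin n) (Fin n) ℝ) (S : Matrix (Fin n) (Fin m) ℝ)
    (R : Matrix (Fin m) (Fin m) ℝ) (hQsymm : Q.IsSymm) (hRsymm : R.IsSymm)
    (hRpd : R.PosDef)
    (hstab : ∃ F : Matrix (Fin m) (Fin n) ℝ, SchurStable (A + B * F))
    (hns : IsUnit (A - B * R⁻¹ * Sᵀ))
    (C : Matrix (Fin q) (Fin n) ℝ) (D : Matrix (Fin q) (Fin m) ℝ)
    (hQ : Q = Cᵀ * C) (hS : S = Cᵀ * D) (hR : R = Dᵀ * D)
    (hrank : ∀ θ : ℝ, θ ∈ Set.Icc (0 : ℝ) (2 * Real.pi) →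
      (Matrix.fromBlocks
        (A.map Complex.ofReal - Complex.exp (θ * Complex.I) • (1 : Matrix (Fin n) (Fin n) ℂ))
        (B.map Complex.ofReal) (C.map Complex.ofReal) (D.map Complex.ofReal)).rank = n + m) :
    ∃ X : Matrix (Fin n) (Fin n) ℝ, IsStabilizingSolution A B Q S R X ∧ X.PosSemidef ∧
      ∀ Y : Matrix (Fin n) (Fin n) ℝ, IsStabilizingSolution A B Q S R Y → Y = X :=
  dare_exists_unique_stabilizing_solution_general A B Q S R hRpd hstab C D hQ hS hR hrank
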